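/- For arbitrary nonzero q½, t½ and all f, g ∈ V: {f,g} = {g,f}; {T(f),g} = {f,T(g)}; {X·f,g} = {f,Y⁻¹(g)}; and {Y(f),g} = {f,X⁻¹·g}. (These are the symmetry of the duality pairing and its invariance under the duality anti-involution φ of the rank-one double affine Hecke algebra, which fixes T and sends X ↦ Y⁻¹, Y ↦ X⁻¹.) -/

import Mathlib

noncomputable section

/-- `V = ℂ[X, X⁻¹]`, the space of complex Laurent polynomials. -/
abbrev V : Type := LaurentPolynomial ℂ

/-- The monomial `X ^ m`. -/
def Xm (m : ℤ) : V := LaurentPolynomial.T m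

/-- The radical of the duality pairing. -/
def Rad (pair : V →ₗ[ℂ] V →ₗ[ℂ] ℂ) : Submodule ℂ V := LinearMap.ker pair

/-!
A linear map on a module generated from a vector `v` by the powers of `X` is determined by its
value at `v` and its behaviour under `X`. Since `{X f, g} = {f, Y⁻¹ g}` holds by construction, an
adjunction `{a f, g} = {f, b g}` need only be checked at `v` and shown to hold at `X f` exactly when
it holds at `f`; the latter is the image of a relation between `a` and `X` under the anti-involution
`φ`. The Hecke algebra relations give this for `T`, fixed by `φ`, and for `π = Y T⁻¹`, sent by `φ`
to `T⁻¹ X⁻¹ = X T`. Composing the two, `Y = π T` is adjoint to `T X T = X⁻¹`, and then symmetry of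
the pairing propagates from `f` to `X f` in the same way.
-/

section CyclicVector

variable {R M N : Type*} [CommRing R] [AddCommGroup M] [Module R M] [AddCommGroup N] [Module R N]
  {X : M ≃ₗ[R] M} {v : M}

/-- `v` generates `M` as a module over the Laurent polynomials in the operator `X`. -/
def IsCyclicFor (X : M ≃ₗ[R] M) (v : M) : Prop :=
  Submodule.span R (Set.range fun m : ℤ => (X ^ m) v) = ⊤

namespace IsCyclicFor

theorem linearMap_ext (hv : IsCyclicFor X v) {φ ψ : M →ₗ[R] N}
    (h : ∀ m : ℤ, φ ((X ^ m) v) = ψ ((X ^ m) v)) : φ = ψ :=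
  LinearMap.ext_on_range hv h

theorem linearMap_ext_of_iff (hv : IsCyclicFor X v) {φ ψ : M →ₗ[R] N} (hφψ : φ v = ψ v)
    (hX : ∀ f, φ (X f) = ψ (X f) ↔ φ f = ψ f) : φ = ψ := by
  refine hv.linearMap_ext fun m => ?_
  induction m using Int.induction_on with
  | zero => exact hφψ
  | succ i ih => rwa [add_comm, zpow_one_add, LinearEquiv.mul_apply, hX]
  | pred i ih => rwa [← hX, ← LinearEquiv.mul_apply, ← zpow_one_add, add_sub_cancel]

theorem isAdjointPair_of_iff (hv : IsCyclicFor X v) {B : M →ₗ[R] M →ₗ[R] N} {a b : M →ₗ[R] M}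
    (hab : ∀ g, B (a v) g = B v (b g))
    (hX : ∀ f, (∀ g, B (a (X f)) g = B (X f) (b g)) ↔ ∀ g, B (a f) g = B f (b g)) :
    LinearMap.IsAdjointPair B B a b :=
  LinearMap.isAdjointPair_iff_comp_eq_compl₂.mpr <|
    hv.linearMap_ext_of_iff (LinearMap.ext hab) fun f => by
      rw [LinearMap.ext_iff, LinearMap.ext_iff]
      exact hX f

theorem isAdjointPair_of_zpow_apply (hv : IsCyclicFor X v) {B : M →ₗ[R] M →ₗ[R] N}
    {ε : M →ₗ[R] N} {Y : ℤ → M →ₗ[R] M} (hY : ∀ a b, Y (a + b) = Y a ∘ₗ Y b)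
    (hB : ∀ (m : ℤ) (g : M), B ((X ^ m) v) g = ε (Y (-m) g)) :
    LinearMap.IsAdjointPair B B X (Y (-1)) := by
  refine LinearMap.isAdjointPair_iff_comp_eq_compl₂ (f := X.toLinearMap).mpr <|
    hv.linearMap_ext fun m => LinearMap.ext fun g => ?_
  calc B (X ((X ^ m) v)) g
      = B ((X ^ (m + 1)) v) g := by rw [add_comm, zpow_one_add, LinearEquiv.mul_apply]
    _ = ε (Y (-m) (Y (-1) g)) := by rw [hB, neg_add, hY, LinearMap.comp_apply]
    _ = B ((X ^ m) v) (Y (-1) g) := (hB m _).symm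

end IsCyclicFor

theorem coe_apply_neg_one_eq_inv {Y : ℤ → M →ₗ[R] M} {Y₁ : M ≃ₗ[R] M} (h0 : Y 0 = LinearMap.id)
    (h1 : Y 1 = Y₁) (hadd : ∀ a b, Y (a + b) = Y a ∘ₗ Y b) :
    ⇑(Y (-1)) = (Y₁⁻¹ : M ≃ₗ[R] M) := by
  ext f
  have h : Y 1 ∘ₗ Y (-1) = LinearMap.id := by rw [← hadd, add_neg_cancel, h0]
  rw [h1] at h
  exact (LinearEquiv.eq_symm_apply Y₁).mpr (LinearMap.congr_fun h f)

end CyclicVector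

section DAHA

variable {R M N : Type*} [CommRing R] [AddCommGroup M] [Module R M] [AddCommGroup N] [Module R N]
  {q t : Rˣ} {X T π : M ≃ₗ[R] M} {v : M} {B : M →ₗ[R] M →ₗ[R] N}

/-- The defining relations of the double affine Hecke algebra of type `A₁` for automorphisms of a
module. The parameters `q` and `t` stand for `q½` and `t½`, the Hecke relation
`(T - t) (T + t⁻¹) = 0` is written as `T = T⁻¹ + (t - t⁻¹)`, and the operator `Y` is `π * T`. -/
structure DAHARelations (q t : Rˣ) (X T π : M ≃ₗ[R] M) : Prop where
  hecke : ∀ f, T f = T⁻¹ f + ((t : R) - ↑t⁻¹) • f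
  T_mul_X_mul_T : T * X * T = X⁻¹
  π_mul_π : π * π = 1
  π_X : ∀ f, π (X f) = (q : R) • X⁻¹ (π f)

/-- A cyclic vector that behaves like the constant polynomial `1` in the polynomial
representation. -/
structure IsVacuum (t : Rˣ) (X T π : M ≃ₗ[R] M) (v : M) : Prop where
  T_apply : T v = (t : R) • v
  π_apply : π v = v
  cyclic : IsCyclicFor X v

/-- A bilinear pairing `{f, g}` with the two properties that define the duality pairing:
`{X f, g} = {f, Y⁻¹ g}`, and `{v, X g} = t⁻¹ {v, g}`, as `{v, ·}` is the evaluation at `t⁻¹`. -/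
structure IsDualityPairing (t : Rˣ) (X Y : M ≃ₗ[R] M) (v : M) (B : M →ₗ[R] M →ₗ[R] N) :
    Prop where
  adjoint_X : LinearMap.IsAdjointPair B B X (Y⁻¹ : M ≃ₗ[R] M)
  vacuum_X : ∀ g, B v (X g) = (↑t⁻¹ : R) • B v g

namespace DAHARelations

theorem T_X (hA : DAHARelations q t X T π) (f : M) : T (X f) = X⁻¹ (T⁻¹ f) :=
  LinearEquiv.congr_fun (eq_mul_inv_of_mul_eq hA.T_mul_X_mul_T) f

theorem X_T (hA : DAHARelations q t X T π) (f : M) : X (T f) = T⁻¹ (X⁻¹ f) :=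
  LinearEquiv.congr_fun
    (eq_inv_mul_of_mul_eq ((mul_assoc T X T).symm.trans hA.T_mul_X_mul_T)) f

theorem Y_inv (hA : DAHARelations q t X T π) : (π * T)⁻¹ = T⁻¹ * π := by
  rw [mul_inv_rev, inv_eq_of_mul_eq_one_left hA.π_mul_π]

theorem Y_inv_T (hA : DAHARelations q t X T π) (f : M) :
    (π * T)⁻¹ (T f) = T⁻¹ ((π * T) f) := by
  rw [hA.Y_inv]; rfl

theorem Y_inv_X_T (hA : DAHARelations q t X T π) (f : M) :
    (π * T)⁻¹ (X (T f)) = (q : R) • X (T ((π * T) f)) := by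
  rw [hA.Y_inv, LinearEquiv.mul_apply, hA.π_X, map_smul, hA.X_T]; rfl

end DAHARelations

theorem IsVacuum.Y_inv_apply (hA : DAHARelations q t X T π) (hv : IsVacuum t X T π v) :
    (π * T)⁻¹ v = (↑t⁻¹ : R) • v := by
  have hT : T ((↑t⁻¹ : R) • v) = v := by
    rw [map_smul, hv.T_apply, smul_smul, Units.inv_mul, one_smul]
  rw [hA.Y_inv, LinearEquiv.mul_apply, hv.π_apply]
  exact (LinearEquiv.symm_apply_eq T).mpr hT.symm

namespace IsDualityPairing

theorem X_inv_apply {Y : M ≃ₗ[R] M} (hB : IsDualityPairing t X Y v B) (f g : M) :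
    B (X⁻¹ f) g = B f (Y g) := by
  have h := hB.adjoint_X (X⁻¹ f) (Y g)
  rw [← LinearEquiv.mul_apply, ← LinearEquiv.mul_apply, mul_inv_cancel, inv_mul_cancel] at h
  exact h.symm

theorem vacuum_X_inv {Y : M ≃ₗ[R] M} (hB : IsDualityPairing t X Y v B) (g : M) :
    B v (X⁻¹ g) = (t : R) • B v g := by
  have h : B v g = (↑t⁻¹ : R) • B v (X⁻¹ g) := by
    rw [← hB.vacuum_X, ← LinearEquiv.mul_apply, mul_inv_cancel, LinearEquiv.coe_one, id]
  rw [h, smul_smul, Units.mul_inv, one_smul]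

theorem vacuum_T (hA : DAHARelations q t X T π) (hv : IsVacuum t X T π v)
    (hB : IsDualityPairing t X (π * T) v B) (g : M) : B v (T g) = (t : R) • B v g := by
  suffices B v ∘ₗ T.toLinearMap = (t : R) • B v from LinearMap.congr_fun this g
  refine hv.cyclic.linearMap_ext_of_iff ?_ fun f => ?_
  · change B v (T v) = (t : R) • B v v
    rw [hv.T_apply, map_smul]
  · calc B v (T (X f)) = (t : R) • B v (X f)
        ↔ B v (T⁻¹ f) = (↑t⁻¹ : R) • B v f := by
          rw [hA.T_X, hB.vacuum_X_inv, hB.vacuum_X, t.isUnit.smul_left_cancel]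
      _ ↔ B v (T f) = (t : R) • B v f := by
          rw [hA.hecke, map_add, map_smul, sub_smul, add_sub_left_comm, add_eq_left, sub_eq_zero]

/-- The relation dual to `T * X = X⁻¹ * T⁻¹` is `Y⁻¹ * T = T⁻¹ * Y`, so self-adjointness of `T` on
`X f` is self-adjointness of `T⁻¹` on `f`. -/
theorem isAdjointPair_T (hA : DAHARelations q t X T π) (hv : IsVacuum t X T π v)
    (hB : IsDualityPairing t X (π * T) v B) : LinearMap.IsAdjointPair B B T T := by
  refine hv.cyclic.isAdjointPair_of_iff (a := T.toLinearMap) (b := T.toLinearMap)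
    (fun g => ?_) fun f => ?_
  · change B (T v) g = B v (T g)
    rw [hv.T_apply, map_smul, LinearMap.smul_apply, hB.vacuum_T hA hv]
  · calc (∀ g, B (T (X f)) g = B (X f) (T g))
        ↔ ∀ g, B (T⁻¹ f) ((π * T) g) = B f (T⁻¹ ((π * T) g)) := by
          simp only [hA.T_X, hB.X_inv_apply, hB.adjoint_X _ _, hA.Y_inv_T]
      _ ↔ ∀ g, B (T⁻¹ f) g = B f (T⁻¹ g) :=
          ((π * T).surjective.forall (p := fun g => B (T⁻¹ f) g = B f (T⁻¹ g))).symm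
      _ ↔ ∀ g, B (T f) g = B f (T g) := by
          simp only [hA.hecke, map_add, map_smul, LinearMap.add_apply, LinearMap.smul_apply,
            add_left_inj]

theorem isAdjointPair_π (hA : DAHARelations q t X T π) (hv : IsVacuum t X T π v)
    (hB : IsDualityPairing t X (π * T) v B) :
    LinearMap.IsAdjointPair B B π (X * T : M ≃ₗ[R] M) := by
  refine hv.cyclic.isAdjointPair_of_iff (a := π.toLinearMap) (b := (X * T : M ≃ₗ[R] M).toLinearMap)
    (fun g => ?_) fun f => ?_
  · change B (π v) g = B v (X (T g))
    rw [hv.π_apply, hB.vacuum_X, hB.vacuum_T hA hv, smul_smul, Units.inv_mul, one_smul]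
  · calc (∀ g, B (π (X f)) g = B (X f) (X (T g)))
        ↔ ∀ g, B (π f) ((π * T) g) = B f (X (T ((π * T) g))) := by
          simp only [hA.π_X, map_smul, LinearMap.smul_apply, hB.X_inv_apply, hB.adjoint_X _ _,
            hA.Y_inv_X_T, q.isUnit.smul_left_cancel]
      _ ↔ ∀ g, B (π f) g = B f (X (T g)) :=
          ((π * T).surjective.forall (p := fun g => B (π f) g = B f (X (T g)))).symm

theorem isAdjointPair_Y (hA : DAHARelations q t X T π) (hv : IsVacuum t X T π v)
    (hB : IsDualityPairing t X (π * T) v B) :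
    LinearMap.IsAdjointPair B B (π * T : M ≃ₗ[R] M) (X⁻¹ : M ≃ₗ[R] M) := fun f g => by
  rw [LinearEquiv.mul_apply, hB.isAdjointPair_π hA hv, hB.isAdjointPair_T hA hv,
    ← hA.T_mul_X_mul_T]
  rfl

theorem apply_vacuum (hA : DAHARelations q t X T π) (hv : IsVacuum t X T π v)
    (hB : IsDualityPairing t X (π * T) v B) (f : M) : B f v = B v f := by
  suffices B.flip v = B v from LinearMap.congr_fun this f
  refine hv.cyclic.linearMap_ext_of_iff rfl fun f => ?_
  rw [LinearMap.flip_apply, LinearMap.flip_apply, hB.adjoint_X, hv.Y_inv_apply hA, map_smul,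
    hB.vacuum_X]
  exact t⁻¹.isUnit.smul_left_cancel

theorem symm_apply (hA : DAHARelations q t X T π) (hv : IsVacuum t X T π v)
    (hB : IsDualityPairing t X (π * T) v B) (f g : M) : B f g = B g f := by
  suffices B = B.flip from LinearMap.congr_fun₂ this f g
  refine hv.cyclic.linearMap_ext_of_iff (LinearMap.ext fun g => (hB.apply_vacuum hA hv g).symm)
    fun f => ?_
  calc B (X f) = B.flip (X f)
      ↔ ∀ g, B (X f) ((π * T) g) = B ((π * T) g) (X f) :=
        LinearMap.ext_iff.trans (π * T).surjective.forall
    _ ↔ ∀ g, B f g = B g f := by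
        simp only [hB.adjoint_X _ _, hB.isAdjointPair_Y hA hv _ _, ← LinearEquiv.mul_apply,
          inv_mul_cancel, LinearEquiv.coe_one, id]
    _ ↔ B f = B.flip f := (LinearMap.ext_iff (f := B f) (g := B.flip f)).symm

end IsDualityPairing

end DAHA

section DemazureLusztig

variable {R L : Type*} [CommRing R] [CommRing L] [Algebra R L] {q t : Rˣ} {x : Lˣ}
  {s T π : L →ₗ[R] L}

/-- The operator `f(X) ↦ f(q X⁻¹)` on functions of `X`, where `X` acts as multiplication by the
unit `x`; the operator `π` is the case `q = q½` and the reflection `s` the case `q = 1`. -/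
structure IsTwistedInversion (q : Rˣ) (x : Lˣ) (π : L →ₗ[R] L) : Prop where
  map_one : π 1 = 1
  map_mul : ∀ f, π (x * f) = (q : R) • (↑x⁻¹ * π f)
  involutive : Function.Involutive π

/-- `T` is the Demazure–Lusztig operator `t s + (t - t⁻¹) (X² - 1)⁻¹ (s - 1)`, with the denominator
`X² - 1` cleared and `X` acting as multiplication by the unit `x`. -/
def IsDemazureLusztig (t : Rˣ) (x : Lˣ) (s T : L →ₗ[R] L) : Prop :=
  ∀ f, ((x : L) ^ 2 - 1) * T f
    = (t : R) • (((x : L) ^ 2 - 1) * s f) + ((t : R) - ↑t⁻¹) • (s f - f)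

namespace IsDemazureLusztig

theorem sub_one_mul_apply (hT : IsDemazureLusztig t x s T) (f : L) :
    ((x : L) ^ 2 - 1) * T f = algebraMap R L t * ((x ^ 2 - 1) * s f)
      + (algebraMap R L t - algebraMap R L ↑t⁻¹) * (s f - f) := by
  rw [hT, Algebra.smul_def, Algebra.smul_def, map_sub]

theorem sub_one_mul_reflection_apply (hs : IsTwistedInversion 1 x s)
    (hT : IsDemazureLusztig t x s T) (f : L) :
    ((x : L) ^ 2 - 1) * s (T f) = algebraMap R L t * ((x ^ 2 - 1) * f)
      + (algebraMap R L t - algebraMap R L ↑t⁻¹) * (x ^ 2 * (s f - f)) := by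
  have s_mul (g : L) : s (((x : L) ^ 2 - 1) * g) = ((↑x⁻¹ : L) ^ 2 - 1) * s g := by
    rw [sub_mul, one_mul, map_sub, sq, mul_assoc, hs.map_mul, hs.map_mul]
    simp only [Units.val_one, one_smul]
    ring
  have h := congrArg s (hT f)
  rw [map_add, map_smul, map_smul, s_mul, s_mul, map_sub, hs.involutive, Algebra.smul_def,
    Algebra.smul_def, map_sub] at h
  have hx : (x : L) ^ 2 * (↑x⁻¹ : L) ^ 2 = 1 := by rw [← mul_pow, Units.mul_inv, one_pow]
  linear_combination (-x ^ 2 : L) * h + (s (T f) - algebraMap R L t * f) * hx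

theorem apply_apply (hx : IsLeftRegular ((x : L) ^ 2 - 1)) (hs : IsTwistedInversion 1 x s)
    (hT : IsDemazureLusztig t x s T) (f : L) : T (T f) = f + ((t : R) - ↑t⁻¹) • T f := by
  have ht : algebraMap R L t * algebraMap R L ↑t⁻¹ = 1 := by
    rw [← map_mul, Units.mul_inv, map_one]
  -- Each of the two applications of `T` contributes a denominator `X² - 1`.
  refine hx (hx ?_)
  dsimp only
  rw [Algebra.smul_def, map_sub]
  have hTf := hT.sub_one_mul_apply f
  have hTTf := hT.sub_one_mul_apply (T f)
  have hsTf := hT.sub_one_mul_reflection_apply hs f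
  generalize algebraMap R L t = u at *
  generalize algebraMap R L ↑t⁻¹ = w at *
  linear_combination ((x : L) ^ 2 - 1) * hTTf + (u * x ^ 2 - w) * hsTf
    - (u - w) * x ^ 2 * hTf + ((x : L) ^ 2 - 1) ^ 2 * f * ht

theorem apply_mul_apply (hx : IsLeftRegular ((x : L) ^ 2 - 1)) (hs : IsTwistedInversion 1 x s)
    (hT : IsDemazureLusztig t x s T) (f : L) : T (x * T f) = ↑x⁻¹ * f := by
  have ht : algebraMap R L t * algebraMap R L ↑t⁻¹ = 1 := by
    rw [← map_mul, Units.mul_inv, map_one]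
  have hxy : (x : L) * ↑x⁻¹ = 1 := x.mul_inv
  refine hx (hx ?_)
  dsimp only
  have hTf := hT.sub_one_mul_apply f
  have hTxTf := hT.sub_one_mul_apply (x * T f)
  have hsTf := hT.sub_one_mul_reflection_apply hs f
  rw [hs.map_mul, Units.val_one, one_smul] at hTxTf
  generalize algebraMap R L t = u at *
  generalize algebraMap R L ↑t⁻¹ = w at *
  linear_combination ((x : L) ^ 2 - 1) * hTxTf + (u * x ^ 2 - w) * ↑x⁻¹ * hsTf
    - (u - w) * x * hTf + ((x : L) ^ 2 - 1) ^ 2 * ↑x⁻¹ * f * ht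
    + (u - w) * x * ((u * x ^ 2 - w) * s f - (u - w) * f) * hxy

theorem apply_one (hx : IsLeftRegular ((x : L) ^ 2 - 1)) (hs : IsTwistedInversion 1 x s)
    (hT : IsDemazureLusztig t x s T) : T 1 = (t : R) • 1 := by
  refine hx ?_
  dsimp only
  rw [hT, hs.map_one, sub_self, smul_zero, add_zero, mul_smul_comm]

/-- The Demazure–Lusztig operator as an automorphism, with inverse `T - (t - t⁻¹)`. -/
def toLinearEquiv (hx : IsLeftRegular ((x : L) ^ 2 - 1)) (hs : IsTwistedInversion 1 x s)
    (hT : IsDemazureLusztig t x s T) : L ≃ₗ[R] L :=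
  LinearEquiv.ofLinearMap T (T - ((t : R) - ↑t⁻¹) • LinearMap.id)
    (LinearMap.ext fun f => by
      simp only [LinearMap.comp_apply, LinearMap.sub_apply, LinearMap.smul_apply,
        LinearMap.id_apply, map_sub, map_smul, hT.apply_apply hx hs, add_sub_cancel_right])
    (LinearMap.ext fun f => by
      simp only [LinearMap.comp_apply, LinearMap.sub_apply, LinearMap.smul_apply,
        LinearMap.id_apply, hT.apply_apply hx hs, add_sub_cancel_right])

theorem dahaRelations (hx : IsLeftRegular ((x : L) ^ 2 - 1)) (hs : IsTwistedInversion 1 x s)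
    (hT : IsDemazureLusztig t x s T) (hπ : IsTwistedInversion q x π) :
    DAHARelations q t (x.mulLeftLinearEquiv R L) (hT.toLinearEquiv hx hs)
      (LinearEquiv.ofInvolutive π hπ.involutive) where
  hecke f := (sub_add_cancel (T f) _).symm
  T_mul_X_mul_T := LinearEquiv.ext (hT.apply_mul_apply hx hs)
  π_mul_π := LinearEquiv.ext hπ.involutive
  π_X := hπ.map_mul

theorem isVacuum_one (hx : IsLeftRegular ((x : L) ^ 2 - 1)) (hs : IsTwistedInversion 1 x s)
    (hT : IsDemazureLusztig t x s T) (hπ : IsTwistedInversion q x π)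
    (hL : IsCyclicFor (x.mulLeftLinearEquiv R L) 1) :
    IsVacuum t (x.mulLeftLinearEquiv R L) (hT.toLinearEquiv hx hs)
      (LinearEquiv.ofInvolutive π hπ.involutive) 1 where
  T_apply := hT.apply_one hx hs
  π_apply := hπ.map_one
  cyclic := hL

end IsDemazureLusztig

end DemazureLusztig

section LaurentPolynomial

open scoped LaurentPolynomial

variable {R N : Type*} [CommRing R] [AddCommGroup N] [Module R N]

/-- The variable `X` of the ring of Laurent polynomials, as a unit. -/
def laurentX (R : Type*) [CommRing R] : R[T;T⁻¹]ˣ where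
  val := LaurentPolynomial.T 1
  inv := LaurentPolynomial.T (-1)
  val_inv := by rw [← LaurentPolynomial.T_add, add_neg_cancel, LaurentPolynomial.T_zero]
  inv_val := by rw [← LaurentPolynomial.T_add, neg_add_cancel, LaurentPolynomial.T_zero]

theorem val_laurentX_zpow (m : ℤ) : ((laurentX R ^ m : R[T;T⁻¹]ˣ) : R[T;T⁻¹]) = .T m := by
  induction m using Int.induction_on with
  | zero => exact LaurentPolynomial.T_zero.symm
  | succ i ih => rw [zpow_add_one, Units.val_mul, ih, LaurentPolynomial.T_add]; rfl
  | pred i ih => rw [zpow_sub_one, Units.val_mul, ih, LaurentPolynomial.T_sub]; rfl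

theorem mulLeft_laurentX_zpow_one (m : ℤ) :
    ((laurentX R).mulLeftLinearEquiv R R[T;T⁻¹] ^ m) 1 = .T m := by
  rw [← map_zpow, Units.mulLeftLinearEquiv_apply, mul_one, val_laurentX_zpow]

theorem isCyclicFor_laurentX :
    IsCyclicFor ((laurentX R).mulLeftLinearEquiv R R[T;T⁻¹]) 1 := by
  refine Submodule.eq_top_iff'.mpr fun f => ?_
  induction f using LaurentPolynomial.induction_on' with
  | add f g hf hg => exact add_mem hf hg
  | C_mul_T m c =>
    rw [← LaurentPolynomial.smul_eq_C_mul, ← mulLeft_laurentX_zpow_one]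
    exact Submodule.smul_mem _ c (Submodule.subset_span ⟨m, rfl⟩)

theorem laurentPolynomial_linearMap_ext {φ ψ : R[T;T⁻¹] →ₗ[R] N}
    (h : ∀ m : ℤ, φ (.T m) = ψ (.T m)) : φ = ψ :=
  isCyclicFor_laurentX.linearMap_ext fun m => by rw [mulLeft_laurentX_zpow_one, h]

theorem val_laurentX_sq : (laurentX R : R[T;T⁻¹]) ^ 2 = .T 2 := LaurentPolynomial.T_pow 1 2

theorem isLeftRegular_laurentX_sq_sub_one :
    IsLeftRegular ((laurentX R : R[T;T⁻¹]) ^ 2 - 1) := by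
  have hX : IsRegular (Polynomial.X : Polynomial R) := Polynomial.monic_X.isRegular
  have hX_sq : IsRegular (Polynomial.X ^ 2 - 1 : Polynomial R) :=
    (Polynomial.monic_X_pow_sub_C 1 two_ne_zero).isRegular
  have h := (IsLocalization.isRegular_mk' (S := R[T;T⁻¹])
    (M := Submonoid.powers (Polynomial.X : Polynomial R)) (m := 1)
    (by rintro _ ⟨n, rfl⟩; exact hX.pow n)).mpr hX_sq
  rw [IsLocalization.mk'_one, LaurentPolynomial.algebraMap_eq_toLaurent, map_sub, map_pow,
    Polynomial.toLaurent_X, map_one] at h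
  exact h.left

theorem isTwistedInversion_laurentX {q : Rˣ} {π : R[T;T⁻¹] →ₗ[R] R[T;T⁻¹]}
    (hπ : ∀ m : ℤ, π (.T m) = (↑(q ^ m) : R) • .T (-m)) :
    IsTwistedInversion q (laurentX R) π where
  map_one := by
    rw [← LaurentPolynomial.T_zero, hπ, zpow_zero, Units.val_one, one_smul, neg_zero]
  map_mul f := by
    refine LinearMap.congr_fun (f := π ∘ₗ LinearMap.mulLeft R (.T 1))
      (g := (q : R) • LinearMap.mulLeft R (.T (-1)) ∘ₗ π)
      (laurentPolynomial_linearMap_ext fun m => ?_) f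
    simp only [LinearMap.comp_apply, LinearMap.smul_apply, LinearMap.mulLeft_apply, hπ,
      ← LaurentPolynomial.T_add, mul_smul_comm, smul_smul, zpow_one_add, Units.val_mul, neg_add]
  involutive f := by
    refine LinearMap.congr_fun (f := π ∘ₗ π) (g := LinearMap.id)
      (laurentPolynomial_linearMap_ext fun m => ?_) f
    rw [LinearMap.comp_apply, hπ, map_smul, hπ, smul_smul, ← Units.val_mul, ← zpow_add,
      add_neg_cancel, zpow_zero, Units.val_one, one_smul, neg_neg, LinearMap.id_apply]

theorem eval_T_one_mul {t : Rˣ} {ev : R[T;T⁻¹] →ₗ[R] R}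
    (hev : ∀ m : ℤ, ev (.T m) = ↑(t ^ (-m))) (f : R[T;T⁻¹]) :
    ev (.T 1 * f) = ↑t⁻¹ * ev f := by
  refine LinearMap.congr_fun (f := ev ∘ₗ LinearMap.mulLeft R (.T 1)) (g := (↑t⁻¹ : R) • ev)
    (laurentPolynomial_linearMap_ext fun m => ?_) f
  rw [LinearMap.comp_apply, LinearMap.mulLeft_apply, ← LaurentPolynomial.T_add, hev, neg_add,
    zpow_add, zpow_neg_one, Units.val_mul, LinearMap.smul_apply, hev, smul_eq_mul]

theorem isDualityPairing_laurentX {t : Rˣ} {ev : R[T;T⁻¹] →ₗ[R] R}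
    (hev : ∀ m : ℤ, ev (.T m) = ↑(t ^ (-m)))
    {Y : R[T;T⁻¹] ≃ₗ[R] R[T;T⁻¹]} {Yz : ℤ → R[T;T⁻¹] →ₗ[R] R[T;T⁻¹]}
    (hYz0 : Yz 0 = LinearMap.id) (hYz1 : Yz 1 = Y)
    (hYzadd : ∀ a b : ℤ, Yz (a + b) = Yz a ∘ₗ Yz b)
    {B : R[T;T⁻¹] →ₗ[R] R[T;T⁻¹] →ₗ[R] R}
    (hB : ∀ (m : ℤ) (g : R[T;T⁻¹]), B (.T m) g = ev (Yz (-m) g)) :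
    IsDualityPairing t ((laurentX R).mulLeftLinearEquiv R R[T;T⁻¹]) Y 1 B where
  adjoint_X := by
    have hB' (m : ℤ) (g : R[T;T⁻¹]) :
        B (((laurentX R).mulLeftLinearEquiv R R[T;T⁻¹] ^ m) 1) g = ev (Yz (-m) g) := by
      rw [mulLeft_laurentX_zpow_one, hB]
    rw [← coe_apply_neg_one_eq_inv hYz0 hYz1 hYzadd]
    exact isCyclicFor_laurentX.isAdjointPair_of_zpow_apply hYzadd hB'
  vacuum_X g := by
    have B_one (f : R[T;T⁻¹]) : B 1 f = ev f := by
      rw [← LaurentPolynomial.T_zero, hB, neg_zero, hYz0, LinearMap.id_apply]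
    rw [B_one, B_one]
    exact eval_T_one_mul hev g

end LaurentPolynomial

theorem stmt9_general {R : Type*} [CommRing R] (q t : Rˣ)
    (S Top Pi Y : LaurentPolynomial R →ₗ[R] LaurentPolynomial R)
    (hS : ∀ m : ℤ, S (.T m) = .T (-m))
    (hPi : ∀ m : ℤ, Pi (.T m) = (↑(q ^ m) : R) • .T (-m))
    (hT : ∀ f, (.T 2 - 1) * Top f
      = (t : R) • ((.T 2 - 1) * S f) + ((t : R) - ↑t⁻¹) • (S f - f))
    (hY : Y = Pi ∘ₗ Top)
    (ev : LaurentPolynomial R →ₗ[R] R) (hev : ∀ m : ℤ, ev (.T m) = ↑(t ^ (-m)))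
    (Yz : ℤ → LaurentPolynomial R →ₗ[R] LaurentPolynomial R)
    (hYz0 : Yz 0 = LinearMap.id) (hYz1 : Yz 1 = Y)
    (hYzadd : ∀ a b : ℤ, Yz (a + b) = Yz a ∘ₗ Yz b)
    (pair : LaurentPolynomial R →ₗ[R] LaurentPolynomial R →ₗ[R] R)
    (hpair : ∀ (m : ℤ) (g : LaurentPolynomial R), pair (.T m) g = ev (Yz (-m) g))
    (f g : LaurentPolynomial R) :
    pair f g = pair g f ∧
      pair (Top f) g = pair f (Top g) ∧
      pair (.T 1 * f) g = pair f (Yz (-1) g) ∧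
      pair (Y f) g = pair f (.T (-1) * g) := by
  have hx := isLeftRegular_laurentX_sq_sub_one (R := R)
  have hs : IsTwistedInversion 1 (laurentX R) S :=
    isTwistedInversion_laurentX fun m => by rw [hS, one_zpow, Units.val_one, one_smul]
  have hπ : IsTwistedInversion q (laurentX R) Pi := isTwistedInversion_laurentX hPi
  have hTop : IsDemazureLusztig t (laurentX R) S Top := by
    rwa [IsDemazureLusztig, val_laurentX_sq]
  have hA := hTop.dahaRelations hx hs hπ
  have hv := hTop.isVacuum_one hx hs hπ isCyclicFor_laurentX
  let YEquiv := LinearEquiv.ofInvolutive Pi hπ.involutive * hTop.toLinearEquiv hx hs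
  have hYEquiv : Yz 1 = YEquiv := hYz1.trans hY
  have hB := isDualityPairing_laurentX hev hYz0 hYEquiv hYzadd hpair
  refine ⟨hB.symm_apply hA hv f g, hB.isAdjointPair_T hA hv f g, ?_, ?_⟩
  · rw [coe_apply_neg_one_eq_inv hYz0 hYEquiv hYzadd]
    exact hB.adjoint_X f g
  · rw [hY]
    exact hB.isAdjointPair_Y hA hv f g

/-- symmetry of the duality pairing `{f,g} = ev(L_f(g))` and its
invariance under the duality anti-involution `φ` (which fixes `T` and sends
`X ↦ Y⁻¹`, `Y ↦ X⁻¹`): `{f,g} = {g,f}`, `{T f, g} = {f, T g}`,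
`{X·f, g} = {f, Y⁻¹ g}` and `{Y f, g} = {f, X⁻¹·g}`. -/
theorem stmt9
    (q2 t2 : ℂ) (hq2 : q2 ≠ 0) (ht2 : t2 ≠ 0)
    (S Top Pi Y : V →ₗ[ℂ] V)
    (hS : ∀ m : ℤ, S (Xm m) = Xm (-m))
    (hPi : ∀ m : ℤ, Pi (Xm m) = q2 ^ m • Xm (-m))
    (hT : ∀ f : V, (Xm 2 - 1) * Top f
        = t2 • ((Xm 2 - 1) * S f) + (t2 - t2⁻¹) • (S f - f))
    (hY : Y = Pi ∘ₗ Top)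
    (ev : V →ₗ[ℂ] ℂ) (hev : ∀ m : ℤ, ev (Xm m) = t2 ^ (-m))
    (Yz : ℤ → V →ₗ[ℂ] V)
    (hYz0 : Yz 0 = LinearMap.id) (hYz1 : Yz 1 = Y)
    (hYzadd : ∀ a b : ℤ, Yz (a + b) = Yz a ∘ₗ Yz b)
    (pair : V →ₗ[ℂ] V →ₗ[ℂ] ℂ)
    (hpair : ∀ (m : ℤ) (g : V), pair (Xm m) g = ev (Yz (-m) g))
    :
    ∀ f g : V,
      pair f g = pair g f ∧
      pair (Top f) g = pair f (Top g) ∧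
      pair (Xm 1 * f) g = pair f (Yz (-1) g) ∧
      pair (Y f) g = pair f (Xm (-1) * g) := by
  exact stmt9_general (Units.mk0 q2 hq2) (Units.mk0 t2 ht2) S Top Pi Y hS
    (fun m => by rw [Units.val_zpow_eq_zpow_val]; exact hPi m) hT hY ev
    (fun m => by rw [Units.val_zpow_eq_zpow_val]; exact hev m) Yz hYz0 hYz1 hYzadd pair hpair
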